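/- Let Λ be a measurable space, μ a probability measure on Λ, and 𝒩, 𝒳 two sets of probability measures on Λ. Let P₁, P₂, P₃ : Λ → ℝ be measurable functions with 0 ≤ Pⱼ(λ) and P₁(λ) + P₂(λ) + P₃(λ) = 1 for every λ ∈ Λ, and suppose ∫ P₁ dμ = 0, ∫ P₂ dν = 0 for every ν ∈ 𝒩, and ∫ P₃ dχ = 0 for every χ ∈ 𝒳. Then for every measurable Ω ⊆ Λ with ν(Ω) = 1 for every ν ∈ 𝒩 and χ(Ω) = 1 for every χ ∈ 𝒳, there exist measurable sets Ω′, Ω″ ⊆ Λ with ν(Ω′) = 1 for every ν ∈ 𝒩, χ(Ω″) = 1 for every χ ∈ 𝒳, and μ(Ω) ≥ μ(Ω′) + μ(Ω″). -/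

import Mathlib

open MeasureTheory

/-!
Where `P₂` and `P₃` both vanish, `P₁ = 1`; since `P₁ = 0` holds `μ`-almost everywhere, the zero sets
of `P₂` and `P₃` are `μ`-almost disjoint. On the other hand the first has full `ν`-measure for every
`ν ∈ N` and the second full `χ`-measure for every `χ ∈ X`, so `Ω ∩ {P₂ = 0}` and `Ω ∩ {P₃ = 0}`
serve as `Ω'` and `Ω''`.
-/

section

variable {α : Type*} [MeasurableSpace α] {μ : Measure α}

theorem ae_eq_zero_of_integral_eq_zero_of_mem_Icc [IsFiniteMeasure μ] {f : α → ℝ} {b : ℝ}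
    (hf : AEMeasurable f μ) (hmem : ∀ᵐ x ∂μ, f x ∈ Set.Icc 0 b) (hint : ∫ x, f x ∂μ = 0) :
    f =ᵐ[μ] 0 :=
  (integral_eq_zero_iff_of_nonneg_ae (hmem.mono fun _ hx ↦ hx.1)
    (Integrable.of_mem_Icc 0 b hf hmem)).1 hint

theorem aedisjoint_preimage_zero_of_add_ne_zero {M : Type*} [AddZeroClass M] {f g h : α → M}
    (hf : f =ᵐ[μ] 0) (hne : ∀ᵐ x ∂μ, f x + g x + h x ≠ 0) :
    AEDisjoint μ (g ⁻¹' {0}) (h ⁻¹' {0}) := by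
  refine measure_eq_zero_iff_ae_notMem.2 ?_
  filter_upwards [hf, hne] with x hfx hnex ⟨hgx, hhx⟩
  rw [Set.mem_preimage, Set.mem_singleton_iff] at hgx hhx
  exact hnex (by rw [hfx, hgx, hhx, Pi.zero_apply, add_zero, add_zero])

theorem measure_inter_add_measure_inter_le_of_aedisjoint {s t : Set α} (u : Set α)
    (ht : NullMeasurableSet t μ) (hst : AEDisjoint μ s t) : μ (u ∩ s) + μ (u ∩ t) ≤ μ u := by
  have hdisj : AEDisjoint μ (u ∩ s) t := hst.mono Set.inter_subset_right le_rfl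
  calc μ (u ∩ s) + μ (u ∩ t)
      = μ ((u ∩ s) \ t) + μ (u ∩ t) := by rw [hdisj.measure_sdiff_left]
    _ ≤ μ (u \ t) + μ (u ∩ t) := by gcongr; exact Set.inter_subset_left
    _ = μ u := by rw [add_comm, measure_inter_add_sdiff₀ u ht]

end

theorem antidistinguishability_structural_general {Λ : Type*} [MeasurableSpace Λ]
    (μ : Measure Λ) [IsFiniteMeasure μ]
    (N X : Set (Measure Λ))
    (hN : ∀ ν ∈ N, IsFiniteMeasure ν) (hX : ∀ χ ∈ X, IsFiniteMeasure χ)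
    (P₁ P₂ P₃ : Λ → ℝ)
    (hm1 : Measurable P₁) (hm2 : Measurable P₂) (hm3 : Measurable P₃)
    (hpos : ∀ x : Λ, 0 ≤ P₁ x ∧ 0 ≤ P₂ x ∧ 0 ≤ P₃ x)
    (hsum : ∀ x : Λ, P₁ x + P₂ x + P₃ x = 1)
    (h1 : ∫ x, P₁ x ∂μ = 0)
    (h2 : ∀ ν ∈ N, ∫ x, P₂ x ∂ν = 0)
    (h3 : ∀ χ ∈ X, ∫ x, P₃ x ∂χ = 0) :
    ∀ Ω : Set Λ, MeasurableSet Ω →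
      ∃ Ω' Ω'' : Set Λ, MeasurableSet Ω' ∧ MeasurableSet Ω'' ∧
        (∀ ν ∈ N, ν Ω' = ν Ω) ∧ (∀ χ ∈ X, χ Ω'' = χ Ω) ∧
        μ Ω ≥ μ Ω' + μ Ω'' := by
  intro Ω hΩ
  have hP₁ : ∀ x, P₁ x ∈ Set.Icc 0 1 := fun x ↦ ⟨(hpos x).1, by linarith [hsum x, hpos x]⟩
  have hP₂ : ∀ x, P₂ x ∈ Set.Icc 0 1 := fun x ↦ ⟨(hpos x).2.1, by linarith [hsum x, hpos x]⟩
  have hP₃ : ∀ x, P₃ x ∈ Set.Icc 0 1 := fun x ↦ ⟨(hpos x).2.2, by linarith [hsum x, hpos x]⟩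
  have hZ₂ : MeasurableSet (P₂ ⁻¹' {0}) := hm2 (measurableSet_singleton 0)
  have hZ₃ : MeasurableSet (P₃ ⁻¹' {0}) := hm3 (measurableSet_singleton 0)
  refine ⟨Ω ∩ P₂ ⁻¹' {0}, Ω ∩ P₃ ⁻¹' {0}, hΩ.inter hZ₂, hΩ.inter hZ₃, fun ν hν ↦ ?_,
    fun χ hχ ↦ ?_, measure_inter_add_measure_inter_le_of_aedisjoint Ω hZ₃.nullMeasurableSet ?_⟩
  · have := hN ν hν
    rw [Set.inter_comm]
    exact Measure.measure_inter_eq_of_ae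
      (ae_eq_zero_of_integral_eq_zero_of_mem_Icc hm2.aemeasurable (.of_forall hP₂) (h2 ν hν))
  · have := hX χ hχ
    rw [Set.inter_comm]
    exact Measure.measure_inter_eq_of_ae
      (ae_eq_zero_of_integral_eq_zero_of_mem_Icc hm3.aemeasurable (.of_forall hP₃) (h3 χ hχ))
  · exact aedisjoint_preimage_zero_of_add_ne_zero
      (ae_eq_zero_of_integral_eq_zero_of_mem_Icc hm1.aemeasurable (.of_forall hP₁) h1)
      (.of_forall fun x ↦ (hsum x).trans_ne one_ne_zero)

theorem antidistinguishability_structural {Λ : Type*} [MeasurableSpace Λ]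
    (μ : Measure Λ) [IsProbabilityMeasure μ]
    (N X : Set (Measure Λ))
    (hN : ∀ ν ∈ N, IsProbabilityMeasure ν) (hX : ∀ χ ∈ X, IsProbabilityMeasure χ)
    (P₁ P₂ P₃ : Λ → ℝ)
    (hm1 : Measurable P₁) (hm2 : Measurable P₂) (hm3 : Measurable P₃)
    (hpos : ∀ x : Λ, 0 ≤ P₁ x ∧ 0 ≤ P₂ x ∧ 0 ≤ P₃ x)
    (hsum : ∀ x : Λ, P₁ x + P₂ x + P₃ x = 1)
    (h1 : ∫ x, P₁ x ∂μ = 0)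
    (h2 : ∀ ν ∈ N, ∫ x, P₂ x ∂ν = 0)
    (h3 : ∀ χ ∈ X, ∫ x, P₃ x ∂χ = 0) :
    ∀ Ω : Set Λ, MeasurableSet Ω → (∀ ν ∈ N, ν Ω = 1) → (∀ χ ∈ X, χ Ω = 1) →
      ∃ Ω' Ω'' : Set Λ, MeasurableSet Ω' ∧ MeasurableSet Ω'' ∧
        (∀ ν ∈ N, ν Ω' = 1) ∧ (∀ χ ∈ X, χ Ω'' = 1) ∧
        μ Ω ≥ μ Ω' + μ Ω'' := by
  intro Ω hΩ hNΩ hXΩ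
  obtain ⟨Ω', Ω'', hΩ', hΩ'', hNΩ', hXΩ'', hle⟩ :=
    antidistinguishability_structural_general μ N X (fun ν hν ↦ have := hN ν hν; inferInstance)
      (fun χ hχ ↦ have := hX χ hχ; inferInstance) P₁ P₂ P₃ hm1 hm2 hm3 hpos hsum h1 h2 h3 Ω hΩ
  exact ⟨Ω', Ω'', hΩ', hΩ'', fun ν hν ↦ (hNΩ' ν hν).trans (hNΩ ν hν),
    fun χ hχ ↦ (hXΩ'' χ hχ).trans (hXΩ χ hχ), hle⟩
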